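/- arXiv:2106.00500 — 3 statements merged into one kernel-verified Lean document; each statement's English description precedes it below -/
import Mathlib

section
/- Let H, A, B be Hermitian matrices of the same finite size and β > 0, and for λ ∈ ℝ let ⟨·⟩_λ denote the Gibbs expectation of the Hamiltonian H − λA at inverse temperature β, i.e. ⟨C⟩_λ = Tr(e^{−β(H−λA)} C)/Tr(e^{−β(H−λA)}). Then the map λ ↦ ⟨B⟩_λ is differentiable and its derivative at λ = 0 equals β(⟨A|B⟩ − ⟨A⟩⟨B⟩), where ⟨A|B⟩ = ∫_0^1 ⟨e^{tβH} A e^{−tβH} B⟩ dt and ⟨·⟩ = ⟨·⟩_0. -/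
open Matrix

noncomputable section

/-- Complex-valued Gibbs expectation `⟨A⟩ = Tr(e^{-βH} A)/Tr(e^{-βH})`. -/
def gibbsC {n : Type*} [Fintype n] [DecidableEq n] (β : ℝ) (H A : Matrix n n ℂ) : ℂ :=
  (NormedSpace.exp ((-β) • H) * A).trace / (NormedSpace.exp ((-β) • H)).trace

/-- Real-valued Gibbs expectation (real part; for Hermitian observables this is `⟨A⟩`). -/
def gibbs {n : Type*} [Fintype n] [DecidableEq n] (β : ℝ) (H A : Matrix n n ℂ) : ℝ :=
  (gibbsC β H A).re

/-- Complex-valued Duhamel–Kubo–Bogolyubov product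
`⟨A|B⟩ = ∫_0^1 ⟨e^{tβH} A* e^{-tβH} B⟩ dt`. -/
def duhamelC {n : Type*} [Fintype n] [DecidableEq n] (β : ℝ) (H A B : Matrix n n ℂ) : ℂ :=
  ∫ t in (0:ℝ)..1,
    gibbsC β H (NormedSpace.exp ((t * β) • H) * Aᴴ *
      NormedSpace.exp ((-(t * β)) • H) * B)

/-- Real-valued Duhamel–Kubo–Bogolyubov product. -/
def duhamel {n : Type*} [Fintype n] [DecidableEq n] (β : ℝ) (H A B : Matrix n n ℂ) : ℝ :=
  (duhamelC β H A B).re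

/-!
Differentiating `t ↦ e^{(1-t)X} e^{tY}` and integrating over `[0, 1]` gives Duhamel's identity
`e^Y - e^X = ∫₀¹ e^{(1-t)X} (Y - X) e^{tY} dt`. Applied to two points `f s` and `f u` of a curve,
it writes the difference quotient of `e^f` as an integral which is jointly continuous in `f u` and
in the difference quotient of `f`, so that letting `u → s` differentiates `e^f` even though `f s`
and `f' s` need not commute. Take `f λ = -β(H - λA)`: paired with `B` under the trace, the integral
is the partition function times `β⟨A|B⟩`, while for `B = 1` cyclicity of the trace removes the
integral. The quotient rule combines the two, and the partition function does not vanish because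
the exponential of a Hermitian matrix is positive definite.
-/

section BanachAlgebra

open NormedSpace Filter Topology

variable {E : Type*} [NormedRing E] [NormedAlgebra ℝ E] [CompleteSpace E]

theorem continuous_exp_of_real : Continuous (exp : E → E) :=
  let _ : NormedAlgebra ℚ E := .restrictScalars ℚ ℝ E
  exp_continuous

/-- The integrand of Duhamel's formula for the derivative of `exp` at `X` in the direction `V`,
with separate base points `X` and `Y` in the two exponential factors. -/
def duhamelIntegrand (X Y V : E) (t : ℝ) : E :=
  exp ((1 - t) • X) * V * exp (t • Y)

theorem continuous_duhamelIntegrand (X : E) :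
    Continuous fun p : (E × E) × ℝ => duhamelIntegrand X p.1.1 p.1.2 p.2 := by
  have := continuous_exp_of_real (E := E)
  unfold duhamelIntegrand
  fun_prop

theorem intervalIntegrable_duhamelIntegrand (X Y V : E) (a b : ℝ) :
    IntervalIntegrable (duhamelIntegrand X Y V) MeasureTheory.volume a b :=
  ((continuous_duhamelIntegrand X).comp (Continuous.prodMk_right (Y, V))).intervalIntegrable a b

theorem hasDerivAt_exp_smul_mul_exp_smul (X Y : E) (t : ℝ) :
    HasDerivAt (fun t : ℝ => exp ((1 - t) • X) * exp (t • Y))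
      (duhamelIntegrand X Y (Y - X) t) t := by
  have hX : HasDerivAt (fun t : ℝ => exp ((1 - t) • X)) (-(exp ((1 - t) • X) * X)) t :=
    (hasDerivAt_exp_smul_const X (1 - t)).comp_const_sub 1 t
  refine (hX.mul (hasDerivAt_exp_smul_const' Y t)).congr_deriv ?_
  unfold duhamelIntegrand
  noncomm_ring

theorem exp_sub_exp_eq_integral_duhamelIntegrand (X Y : E) :
    exp Y - exp X = ∫ t in (0 : ℝ)..1, duhamelIntegrand X Y (Y - X) t := by
  rw [intervalIntegral.integral_eq_sub_of_hasDerivAt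
    (fun t _ => hasDerivAt_exp_smul_mul_exp_smul X Y t)
    (intervalIntegrable_duhamelIntegrand X Y (Y - X) 0 1)]
  simp

theorem slope_exp_comp (f : ℝ → E) (s u : ℝ) :
    slope (fun u => exp (f u)) s u =
      ∫ t in (0 : ℝ)..1, duhamelIntegrand (f s) (f u) (slope f s u) t := by
  simp only [slope_def_module, exp_sub_exp_eq_integral_duhamelIntegrand,
    ← intervalIntegral.integral_smul, duhamelIntegrand, mul_smul_comm, smul_mul_assoc]

theorem hasDerivAt_exp_comp {f : ℝ → E} {f' : E} {s : ℝ} (hf : HasDerivAt f f' s) :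
    HasDerivAt (fun u => exp (f u)) (∫ t in (0 : ℝ)..1, duhamelIntegrand (f s) (f s) f' t) s := by
  have hcont : Continuous fun p : E × E => ∫ t in (0 : ℝ)..1, duhamelIntegrand (f s) p.1 p.2 t :=
    intervalIntegral.continuous_parametric_intervalIntegral_of_continuous'
      (continuous_duhamelIntegrand (f s)) 0 1
  have hpair : Tendsto (fun u => (f u, slope f s u)) (𝓝[≠] s) (𝓝 (f s, f')) :=
    (hf.continuousAt.tendsto.mono_left nhdsWithin_le_nhds).prodMk_nhds hf.tendsto_slope
  rw [hasDerivAt_iff_tendsto_slope, funext (slope_exp_comp f s)]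
  exact (hcont.tendsto (f s, f')).comp hpair

theorem hasDerivAt_clm_exp_comp {F : Type*} [NormedAddCommGroup F] [NormedSpace ℝ F]
    [CompleteSpace F] (l : E →L[ℝ] F) {f : ℝ → E} {f' : E} {s : ℝ} (hf : HasDerivAt f f' s) :
    HasDerivAt (fun u => l (exp (f u)))
      (∫ t in (0 : ℝ)..1, l (duhamelIntegrand (f s) (f s) f' t)) s := by
  rw [l.intervalIntegral_comp_comm (intervalIntegrable_duhamelIntegrand _ _ _ _ _)]
  exact l.hasFDerivAt.comp_hasDerivAt s (hasDerivAt_exp_comp hf)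

end BanachAlgebra

theorem star_trace_mul_of_isHermitian {n R : Type*} [Fintype n] [CommSemiring R] [StarRing R]
    {X Y : Matrix n n R} (hX : X.IsHermitian) (hY : Y.IsHermitian) :
    star (X * Y).trace = (X * Y).trace := by
  rw [← trace_conjTranspose, conjTranspose_mul, hX.eq, hY.eq, trace_mul_comm]

section MatrixExponential

open NormedSpace

variable {n 𝕜 : Type*} [Fintype n] [DecidableEq n] [RCLike 𝕜]

theorem exp_smul_mul_exp_smul (X : Matrix n n 𝕜) (a b : ℝ) :
    exp (a • X) * exp (b • X) = exp ((a + b) • X) := by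
  rw [add_smul, Matrix.exp_add_of_commute _ _ (((Commute.refl X).smul_left a).smul_right b)]

open scoped ComplexOrder in
theorem posDef_exp_of_isHermitian {X : Matrix n n 𝕜} (hX : X.IsHermitian) :
    (exp X).PosDef := by
  have hsqrt : exp X = (exp ((1 / 2 : ℝ) • X))ᴴ * exp ((1 / 2 : ℝ) • X) := by
    rw [(hX.smul (IsSelfAdjoint.all (1 / 2 : ℝ))).exp.eq, exp_smul_mul_exp_smul, add_halves,
      one_smul]
  rw [hsqrt]
  exact .conjTranspose_mul_self _ (mulVec_injective_of_isUnit (Matrix.isUnit_exp _))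

open scoped ComplexOrder in
theorem trace_exp_ne_zero_of_isHermitian [Nonempty n] {X : Matrix n n 𝕜} (hX : X.IsHermitian) :
    (exp X).trace ≠ 0 :=
  (posDef_exp_of_isHermitian hX).trace_pos.ne'

theorem hasDerivAt_trace_exp_mul {f : ℝ → Matrix n n 𝕜} {f' : Matrix n n 𝕜} {s : ℝ}
    (hf : HasDerivAt f f' s) (B : Matrix n n 𝕜) :
    HasDerivAt (fun u => (exp (f u) * B).trace)
      (∫ t in (0 : ℝ)..1, (exp ((1 - t) • f s) * f' * exp (t • f s) * B).trace) s := by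
  let _ : NormedRing (Matrix n n 𝕜) := Matrix.linftyOpNormedRing
  let _ : NormedAlgebra ℝ (Matrix n n 𝕜) := Matrix.linftyOpNormedAlgebra
  exact hasDerivAt_clm_exp_comp
    (traceLinearMap n ℝ 𝕜 ∘ₗ LinearMap.mulRight ℝ B).toContinuousLinearMap hf

theorem hasDerivAt_trace_exp {f : ℝ → Matrix n n 𝕜} {f' : Matrix n n 𝕜} {s : ℝ}
    (hf : HasDerivAt f f' s) :
    HasDerivAt (fun u => (exp (f u)).trace) (exp (f s) * f').trace s := by
  have hcyclic (t : ℝ) :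
      (exp ((1 - t) • f s) * f' * exp (t • f s)).trace = (exp (f s) * f').trace := by
    rw [trace_mul_comm, ← mul_assoc, exp_smul_mul_exp_smul, add_sub_cancel, one_smul]
  simpa [hcyclic] using hasDerivAt_trace_exp_mul hf 1

end MatrixExponential

section Gibbs

open NormedSpace

variable {n : Type*} [Fintype n] [DecidableEq n]

theorem ofReal_gibbs (β : ℝ) {H A : Matrix n n ℂ} (hH : H.IsHermitian) (hA : A.IsHermitian) :
    (gibbs β H A : ℂ) = gibbsC β H A := by
  have hexp : (exp ((-β) • H)).IsHermitian := (hH.smul (IsSelfAdjoint.all (-β))).exp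
  have hZ := star_trace_mul_of_isHermitian hexp isHermitian_one
  rw [mul_one] at hZ
  rw [gibbs, ← Complex.conj_eq_iff_re, ← Complex.star_def, gibbsC, star_div₀, hZ,
    star_trace_mul_of_isHermitian hexp hA]

theorem integral_trace_exp_mul_eq_duhamelC (β : ℝ) {H : Matrix n n ℂ} (A B : Matrix n n ℂ)
    (hZ : (exp ((-β) • H)).trace ≠ 0) :
    ∫ t in (0 : ℝ)..1,
        (exp ((1 - t) • (-β) • H) * (β • A) * exp (t • (-β) • H) * B).trace =
      (exp ((-β) • H)).trace * (β * duhamelC β H Aᴴ B) := by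
  have hsplit (t : ℝ) :
      exp ((1 - t) • (-β) • H) = exp ((-β) • H) * exp ((t * β) • H) := by
    rw [exp_smul_mul_exp_smul, smul_smul]
    ring_nf
  rw [duhamelC, ← intervalIntegral.integral_const_mul, ← intervalIntegral.integral_const_mul]
  congr 1 with t
  rw [gibbsC, mul_div_assoc', mul_div_cancel₀ _ hZ, hsplit, smul_smul, mul_neg,
    conjTranspose_conjTranspose, mul_smul_comm, smul_mul_assoc, smul_mul_assoc, trace_smul,
    Complex.real_smul]
  simp only [mul_assoc]

theorem hasDerivAt_gibbsC (β : ℝ) {H A : Matrix n n ℂ} (B : Matrix n n ℂ) {lam : ℝ}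
    (hZ : (exp ((-β) • (H - lam • A))).trace ≠ 0) :
    HasDerivAt (fun μ : ℝ => gibbsC β (H - μ • A) B)
      (β * (duhamelC β (H - lam • A) Aᴴ B -
        gibbsC β (H - lam • A) A * gibbsC β (H - lam • A) B)) lam := by
  have hexponent : HasDerivAt (fun μ : ℝ => (-β) • (H - μ • A)) (β • A) lam := by
    let _ : NormedAddCommGroup (Matrix n n ℂ) := Matrix.linftyOpNormedAddCommGroup
    let _ : NormedSpace ℝ (Matrix n n ℂ) := Matrix.linftyOpNormedSpace
    exact ((((hasDerivAt_id lam).smul_const A).const_sub H).const_smul (-β)).congr_deriv (by simp)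
  have hnum := hasDerivAt_trace_exp_mul hexponent B
  rw [integral_trace_exp_mul_eq_duhamelC β A B hZ] at hnum
  refine (hnum.div (hasDerivAt_trace_exp hexponent) hZ).congr_deriv ?_
  simp only [gibbsC, mul_smul_comm, trace_smul, Complex.real_smul]
  field_simp

end Gibbs

theorem stmt2_general {n : Type*} [Fintype n] [DecidableEq n] [Nonempty n]
    (β : ℝ) {H A : Matrix n n ℂ} (B : Matrix n n ℂ) (hH : H.IsHermitian) (hA : A.IsHermitian)
    (lam : ℝ) :
    HasDerivAt (fun μ : ℝ => gibbs β (H - μ • A) B)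
      (β * (duhamel β (H - lam • A) A B -
        gibbs β (H - lam • A) A * gibbs β (H - lam • A) B)) lam := by
  have hHlam : (H - lam • A).IsHermitian := hH.sub (hA.smul (IsSelfAdjoint.all lam))
  have hZ := trace_exp_ne_zero_of_isHermitian (hHlam.smul (IsSelfAdjoint.all (-β)))
  have hderiv := hasDerivAt_gibbsC β B hZ
  rw [hA.eq, ← ofReal_gibbs β hHlam hA] at hderiv
  refine (Complex.reCLM.hasFDerivAt.comp_hasDerivAt lam hderiv).congr_deriv ?_
  simp [duhamel, gibbs]

theorem stmt2 {n : Type*} [Fintype n] [DecidableEq n] [Nonempty n]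
    (β : ℝ) (hβ : 0 < β) (H A B : Matrix n n ℂ)
    (hH : H.IsHermitian) (hA : A.IsHermitian) (hB : B.IsHermitian) :
    Differentiable ℝ (fun lam : ℝ => gibbs β (H - lam • A) B) ∧
    deriv (fun lam : ℝ => gibbs β (H - lam • A) B) 0
      = β * (duhamel β H A B - gibbs β H A * gibbs β H B) :=
  ⟨fun lam => (stmt2_general β B hH hA lam).differentiableAt,
    by simpa using (stmt2_general β B hH hA 0).deriv⟩
end
end

section
/- Let H and A be Hermitian matrices of the same finite size and β > 0, and let ⟨·⟩ be the Gibbs expectation of H at inverse temperature β. Then 0 ≤ ⟨A⟩² ≤ ⟨A|A⟩ ≤ ⟨A²⟩, where ⟨A|A⟩ is the Duhamel–Kubo–Bogolyubov product of A with itself. -/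
open Matrix

noncomputable section

/-!
Diagonalise `H` and let `p i` be the Boltzmann weight of the `i`-th eigenstate. Then
`⟨A⟩ = ∑ i, p i * A i i`, and integrating over `t` gives
`⟨A|A⟩ = ∑ i, ∑ j, L (p i) (p j) * |A j i| ^ 2`, where `L a b = ∫ a ^ (1 - t) * b ^ t` is the
logarithmic mean. The lower bound keeps the diagonal terms, where `L a a = a`, and applies Jensen's
inequality; the upper bound is `L a b ≤ (a + b) / 2`. For `A` not Hermitian the arithmetic mean
yields the symmetrised second moment `(⟨A* A⟩ + ⟨A A*⟩) / 2`.
-/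

open Unitary (conjStarAlgAut)

section LogMean

/-- The logarithmic mean `(a - b) / (log a - log b)` of two positive reals, used to evaluate the
Duhamel product; the integral form also covers `a = b`. -/
def logMean (a b : ℝ) : ℝ :=
  ∫ t in (0 : ℝ)..1, a ^ (1 - t) * b ^ t

variable {a b : ℝ}

lemma continuous_rpow_one_sub_mul_rpow (ha : 0 < a) (hb : 0 < b) :
    Continuous fun t : ℝ ↦ a ^ (1 - t) * b ^ t :=
  ((Real.continuous_const_rpow ha.ne').comp (continuous_const.sub continuous_id)).mul
    (Real.continuous_const_rpow hb.ne')

lemma logMean_nonneg (ha : 0 ≤ a) (hb : 0 ≤ b) : 0 ≤ logMean a b :=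
  intervalIntegral.integral_nonneg zero_le_one fun _ _ ↦
    mul_nonneg (Real.rpow_nonneg ha _) (Real.rpow_nonneg hb _)

lemma logMean_self (ha : 0 < a) : logMean a a = a := by
  simp [logMean, ← Real.rpow_add ha]

lemma logMean_le_arith_mean (ha : 0 < a) (hb : 0 < b) : logMean a b ≤ (a + b) / 2 := by
  have arith_mean : ∫ t in (0 : ℝ)..1, ((1 - t) * a + t * b) = (a + b) / 2 := by
    have affine (t : ℝ) : (1 - t) * a + t * b = a + t * (b - a) := by ring
    simp only [affine]
    rw [intervalIntegral.integral_add (Continuous.intervalIntegrable (by fun_prop) _ _)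
      (Continuous.intervalIntegrable (by fun_prop) _ _), intervalIntegral.integral_const,
      intervalIntegral.integral_mul_const, integral_id, smul_eq_mul]
    ring
  rw [logMean, ← arith_mean]
  refine intervalIntegral.integral_mono_on zero_le_one
    ((continuous_rpow_one_sub_mul_rpow ha hb).intervalIntegrable _ _)
    (Continuous.intervalIntegrable (by fun_prop) _ _) fun t ht ↦ ?_
  exact Real.geom_mean_le_arith_mean2_weighted (sub_nonneg.2 ht.2) ht.1 ha.le hb.le
    (sub_add_cancel 1 t)

end LogMean

lemma norm_sum_smul_sq_le {ι E : Type*} [SeminormedAddCommGroup E] [NormedSpace ℝ E]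
    {s : Finset ι} {w : ι → ℝ} (hw : ∀ i ∈ s, 0 ≤ w i) (hw₁ : ∑ i ∈ s, w i = 1) (z : ι → E) :
    ‖∑ i ∈ s, w i • z i‖ ^ 2 ≤ ∑ i ∈ s, w i * ‖z i‖ ^ 2 :=
  (convexOn_univ_norm.pow (fun _ _ ↦ norm_nonneg _) 2).map_sum_le hw hw₁ fun _ _ ↦ Set.mem_univ _

section GibbsState

variable {n : Type*} [Fintype n]

section BoltzmannWeight

/-- The Boltzmann weight `e^{-β E i} / Z` of the state `i` for the energy levels `E`: the diagonal
of the Gibbs state in an eigenbasis of the Hamiltonian. -/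
def boltzmannWeight (β : ℝ) (E : n → ℝ) (i : n) : ℝ :=
  Real.exp (-β * E i) / ∑ j, Real.exp (-β * E j)

variable (β : ℝ) (E : n → ℝ)

lemma sum_exp_pos [Nonempty n] (f : n → ℝ) : 0 < ∑ i, Real.exp (f i) :=
  Finset.sum_pos (fun _ _ ↦ Real.exp_pos _) Finset.univ_nonempty

lemma boltzmannWeight_pos (i : n) : 0 < boltzmannWeight β E i :=
  have : Nonempty n := ⟨i⟩
  div_pos (Real.exp_pos _) (sum_exp_pos _)

lemma sum_boltzmannWeight [Nonempty n] : ∑ i, boltzmannWeight β E i = 1 := by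
  simp only [boltzmannWeight, ← Finset.sum_div]
  exact div_self (sum_exp_pos _).ne'

lemma boltzmannWeight_rpow_mul_rpow (t : ℝ) (i j : n) :
    boltzmannWeight β E i ^ (1 - t) * boltzmannWeight β E j ^ t =
      boltzmannWeight β E i * Real.exp (t * β * E i) * Real.exp (-(t * β) * E j) := by
  have : Nonempty n := ⟨i⟩
  have hZ : 0 < ∑ k, Real.exp (-β * E k) := sum_exp_pos _
  have partition_factor :
      (∑ k, Real.exp (-β * E k)) ^ (1 - t) * (∑ k, Real.exp (-β * E k)) ^ t =
        ∑ k, Real.exp (-β * E k) := by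
    rw [← Real.rpow_add hZ, sub_add_cancel, Real.rpow_one]
  have exp_factor :
      Real.exp (-β * E i) ^ (1 - t) * Real.exp (-β * E j) ^ t =
        Real.exp (-β * E i) * Real.exp (t * β * E i) * Real.exp (-(t * β) * E j) := by
    simp only [← Real.exp_mul, ← Real.exp_add]
    ring_nf
  simp only [boltzmannWeight]
  rw [Real.div_rpow (Real.exp_pos _).le hZ.le, Real.div_rpow (Real.exp_pos _).le hZ.le,
    div_mul_div_comm, partition_factor, exp_factor]
  ring

end BoltzmannWeight

variable [DecidableEq n]

section UnitaryInvariance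

lemma trace_conjStarAlgAut {R : Type*} [CommRing R] [StarRing R] (U : unitaryGroup n R)
    (A : Matrix n n R) : (conjStarAlgAut R _ U A).trace = A.trace :=
  trace_units_conj (Unitary.toUnits U) A

lemma exp_smul_conjStarAlgAut {𝕜 : Type*} [RCLike 𝕜] (U : unitaryGroup n 𝕜) (s : ℝ)
    (A : Matrix n n 𝕜) :
    NormedSpace.exp (s • conjStarAlgAut 𝕜 _ U A) =
      conjStarAlgAut 𝕜 _ U (NormedSpace.exp (s • A)) := by
  have smul_conj : s • conjStarAlgAut 𝕜 _ U A = conjStarAlgAut 𝕜 _ U (s • A) := by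
    simp only [Unitary.conjStarAlgAut_apply, mul_smul_comm, smul_mul_assoc]
  rw [smul_conj]
  exact Matrix.exp_units_conj (Unitary.toUnits U) (s • A)

variable (U : unitaryGroup n ℂ) (β : ℝ) (H A B : Matrix n n ℂ)

lemma gibbsC_conjStarAlgAut :
    gibbsC β (conjStarAlgAut ℂ _ U H) (conjStarAlgAut ℂ _ U A) = gibbsC β H A := by
  simp only [gibbsC, exp_smul_conjStarAlgAut, ← map_mul, trace_conjStarAlgAut]

lemma duhamelC_conjStarAlgAut :
    duhamelC β (conjStarAlgAut ℂ _ U H) (conjStarAlgAut ℂ _ U A) (conjStarAlgAut ℂ _ U B) =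
      duhamelC β H A B := by
  simp only [duhamelC, exp_smul_conjStarAlgAut, ← star_eq_conjTranspose, ← map_star, ← map_mul,
    gibbsC_conjStarAlgAut]

end UnitaryInvariance

section DiagonalHamiltonian

variable (β : ℝ) (E : n → ℝ) (A B : Matrix n n ℂ)

lemma exp_smul_diagonal_ofReal (s : ℝ) :
    NormedSpace.exp (s • diagonal fun i ↦ (E i : ℂ)) =
      diagonal fun i ↦ (Real.exp (s * E i) : ℂ) := by
  rw [← diagonal_smul, exp_diagonal]
  congr 1
  ext i
  simp [Pi.coe_exp, ← Complex.exp_eq_exp_ℂ]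

lemma gibbsC_diagonal :
    gibbsC β (diagonal fun i ↦ (E i : ℂ)) A = ∑ i, boltzmannWeight β E i • A i i := by
  simp only [gibbsC, exp_smul_diagonal_ofReal, trace, diag_apply, diagonal_mul, diagonal_apply_eq,
    Finset.sum_div, boltzmannWeight, Complex.real_smul, Complex.ofReal_div, Complex.ofReal_sum]
  exact Finset.sum_congr rfl fun i _ ↦ by ring

lemma gibbsC_diagonal_duhamel_integrand (t : ℝ) :
    gibbsC β (diagonal fun i ↦ (E i : ℂ))
        (NormedSpace.exp ((t * β) • diagonal fun i ↦ (E i : ℂ)) * Aᴴ *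
          NormedSpace.exp ((-(t * β)) • diagonal fun i ↦ (E i : ℂ)) * B) =
      ∑ i, ∑ j, (boltzmannWeight β E i ^ (1 - t) * boltzmannWeight β E j ^ t) •
        (star (A j i) * B j i) := by
  simp only [gibbsC_diagonal, exp_smul_diagonal_ofReal, mul_apply (N := B), mul_diagonal,
    diagonal_mul, conjTranspose_apply, Finset.smul_sum, boltzmannWeight_rpow_mul_rpow,
    Complex.real_smul, Complex.ofReal_mul]
  exact Finset.sum_congr rfl fun i _ ↦ Finset.sum_congr rfl fun j _ ↦ by ring

lemma duhamelC_diagonal :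
    duhamelC β (diagonal fun i ↦ (E i : ℂ)) A B =
      ∑ i, ∑ j, logMean (boltzmannWeight β E i) (boltzmannWeight β E j) •
        (star (A j i) * B j i) := by
  have continuous_term (i j : n) : Continuous fun t : ℝ ↦
      (boltzmannWeight β E i ^ (1 - t) * boltzmannWeight β E j ^ t) • (star (A j i) * B j i) :=
    (continuous_rpow_one_sub_mul_rpow (boltzmannWeight_pos β E i)
      (boltzmannWeight_pos β E j)).smul continuous_const
  simp only [duhamelC, gibbsC_diagonal_duhamel_integrand]
  rw [intervalIntegral.integral_finsetSum fun i _ ↦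
    (continuous_finsetSum _ fun j _ ↦ continuous_term i j).intervalIntegrable _ _]
  refine Finset.sum_congr rfl fun i _ ↦ ?_
  rw [intervalIntegral.integral_finsetSum fun j _ ↦
    (continuous_term i j).intervalIntegrable _ _]
  simp only [intervalIntegral.integral_smul_const, logMean]

lemma duhamel_diagonal_self :
    duhamel β (diagonal fun i ↦ (E i : ℂ)) A A =
      ∑ i, ∑ j, logMean (boltzmannWeight β E i) (boltzmannWeight β E j) * ‖A j i‖ ^ 2 := by
  simp [duhamel, duhamelC_diagonal, Complex.conj_mul', ← Complex.ofReal_pow]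

lemma gibbs_diagonal_conjTranspose_mul_self :
    gibbs β (diagonal fun i ↦ (E i : ℂ)) (Aᴴ * A) =
      ∑ i, ∑ j, boltzmannWeight β E i * ‖A j i‖ ^ 2 := by
  simp [gibbs, gibbsC_diagonal, mul_apply, Complex.conj_mul', ← Complex.ofReal_pow,
    Finset.mul_sum]

lemma norm_sq_gibbsC_diagonal_le_duhamel [Nonempty n] :
    ‖gibbsC β (diagonal fun i ↦ (E i : ℂ)) A‖ ^ 2 ≤
      duhamel β (diagonal fun i ↦ (E i : ℂ)) A A := by
  set p := boltzmannWeight β E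
  have p_pos : ∀ i, 0 < p i := boltzmannWeight_pos β E
  rw [gibbsC_diagonal, duhamel_diagonal_self]
  calc ‖∑ i, p i • A i i‖ ^ 2
      ≤ ∑ i, p i * ‖A i i‖ ^ 2 :=
        norm_sum_smul_sq_le (fun i _ ↦ (p_pos i).le) (sum_boltzmannWeight β E) _
    _ = ∑ i, logMean (p i) (p i) * ‖A i i‖ ^ 2 := by simp only [logMean_self (p_pos _)]
    _ ≤ ∑ i, ∑ j, logMean (p i) (p j) * ‖A j i‖ ^ 2 :=
        Finset.sum_le_sum fun i _ ↦
          Finset.single_le_sum (f := fun j ↦ logMean (p i) (p j) * ‖A j i‖ ^ 2)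
            (fun j _ ↦ mul_nonneg (logMean_nonneg (p_pos i).le (p_pos j).le) (sq_nonneg _))
            (Finset.mem_univ i)

lemma duhamel_diagonal_le_gibbs_add_gibbs_div_two :
    duhamel β (diagonal fun i ↦ (E i : ℂ)) A A ≤
      (gibbs β (diagonal fun i ↦ (E i : ℂ)) (Aᴴ * A) +
        gibbs β (diagonal fun i ↦ (E i : ℂ)) (A * Aᴴ)) / 2 := by
  set p := boltzmannWeight β E
  have p_pos : ∀ i, 0 < p i := boltzmannWeight_pos β E
  have gibbs_mul_conjTranspose : gibbs β (diagonal fun i ↦ (E i : ℂ)) (A * Aᴴ) =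
      ∑ i, ∑ j, p j * ‖A j i‖ ^ 2 := by
    have h := gibbs_diagonal_conjTranspose_mul_self β E Aᴴ
    simp only [conjTranspose_conjTranspose, conjTranspose_apply, norm_star] at h
    rw [h, Finset.sum_comm]
  rw [duhamel_diagonal_self, gibbs_diagonal_conjTranspose_mul_self, gibbs_mul_conjTranspose]
  calc ∑ i, ∑ j, logMean (p i) (p j) * ‖A j i‖ ^ 2
      ≤ ∑ i, ∑ j, (p i + p j) / 2 * ‖A j i‖ ^ 2 := by
        gcongr with i _ j _
        exact logMean_le_arith_mean (p_pos i) (p_pos j)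
    _ = (∑ i, ∑ j, p i * ‖A j i‖ ^ 2 + ∑ i, ∑ j, p j * ‖A j i‖ ^ 2) / 2 := by
        simp only [← Finset.sum_add_distrib, Finset.sum_div]
        exact Finset.sum_congr rfl fun i _ ↦ Finset.sum_congr rfl fun j _ ↦ by ring

end DiagonalHamiltonian

end GibbsState

theorem stmt3_general {n : Type*} [Fintype n] [DecidableEq n] [Nonempty n]
    (β : ℝ) {H : Matrix n n ℂ} (hH : H.IsHermitian) (A : Matrix n n ℂ) :
    ‖gibbsC β H A‖ ^ 2 ≤ duhamel β H A A ∧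
      duhamel β H A A ≤ (gibbs β H (Aᴴ * A) + gibbs β H (A * Aᴴ)) / 2 := by
  obtain ⟨U, E, rfl⟩ : ∃ (U : unitaryGroup n ℂ) (E : n → ℝ),
      H = conjStarAlgAut ℂ _ U (diagonal fun i ↦ (E i : ℂ)) :=
    ⟨hH.eigenvectorUnitary, hH.eigenvalues, hH.spectral_theorem⟩
  obtain ⟨A, rfl⟩ := EquivLike.surjective (conjStarAlgAut ℂ _ U) A
  simp only [gibbs, duhamel, ← star_eq_conjTranspose, ← map_star, ← map_mul,
    gibbsC_conjStarAlgAut, duhamelC_conjStarAlgAut]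
  exact ⟨norm_sq_gibbsC_diagonal_le_duhamel β E A,
    duhamel_diagonal_le_gibbs_add_gibbs_div_two β E A⟩

theorem stmt3 {n : Type*} [Fintype n] [DecidableEq n] [Nonempty n]
    (β : ℝ) (hβ : 0 < β) (H A : Matrix n n ℂ)
    (hH : H.IsHermitian) (hA : A.IsHermitian) :
    0 ≤ (gibbs β H A) ^ 2 ∧ (gibbs β H A) ^ 2 ≤ duhamel β H A A ∧
      duhamel β H A A ≤ gibbs β H (A * A) := by
  obtain ⟨lower, upper⟩ := stmt3_general β hH A
  exact ⟨sq_nonneg _, (sq_le_sq.2 ((Complex.abs_re_le_norm _).trans (le_abs_self _))).trans lower,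
    by simpa [hA.eq] using upper⟩
end
end

section
/- Let H and A be Hermitian matrices of the same finite size and β > 0, and let ⟨·⟩ be the Gibbs expectation of H at inverse temperature β. Then the Gibbs expectation of the double commutator equals the Duhamel norm squared of the commutator, ⟨[A,[βH,A]]⟩ = ⟨[βH,A] | [βH,A]⟩, and in particular ⟨[A,[βH,A]]⟩ is a non-negative real number. -/
open Matrix

noncomputable section

/-!
Put `K = βH`. The flow `e^{tK} A* e^{-tK}` has derivative `e^{tK} [K,A*] e^{-tK}`, and for Hermitian
`H` the adjoint of `[K,A]` is `-[K,A*]`. The Duhamel integral of `⟨[K,A]|B⟩` therefore telescopes to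
`⟨A*B⟩ - ⟨e^K A* e^{-K} B⟩`. Since `e^{-K}` is the Gibbs weight, cyclicity of the trace turns the
last term into `⟨BA*⟩`, so `⟨[K,A]|B⟩ = ⟨[A*,B]⟩`. Positivity of `⟨C|C⟩` holds already under the
integral sign, where the numerator is the trace of a product of two positive semidefinite matrices.
-/

section HeisenbergFlow

/-- The Heisenberg flow `e^{tK} A e^{-tK}` generated by `K`. For real `t` this is evolution in
imaginary time, as it occurs in the Duhamel product. -/
def heisenbergFlow {𝕜 𝔸 : Type*} [Neg 𝕜] [Ring 𝔸] [TopologicalSpace 𝔸] [IsTopologicalRing 𝔸]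
    [SMul 𝕜 𝔸] (K : 𝔸) (t : 𝕜) (A : 𝔸) : 𝔸 :=
  NormedSpace.exp (t • K) * A * NormedSpace.exp (-t • K)

theorem heisenbergFlow_smul {𝕜 𝔸 : Type*} [Ring 𝕜] [Ring 𝔸] [TopologicalSpace 𝔸]
    [IsTopologicalRing 𝔸] [Module 𝕜 𝔸] (s t : 𝕜) (K A : 𝔸) :
    heisenbergFlow (s • K) t A = heisenbergFlow K (t * s) A := by
  simp only [heisenbergFlow, smul_smul, neg_mul]

theorem hasDerivAt_heisenbergFlow {𝕜 𝔸 : Type*} [RCLike 𝕜] [NormedRing 𝔸] [NormedAlgebra 𝕜 𝔸]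
    [CompleteSpace 𝔸] (K A : 𝔸) (t : 𝕜) :
    HasDerivAt (fun s : 𝕜 => heisenbergFlow K s A) (heisenbergFlow K t ⁅K, A⁆) t := by
  have hpos : HasDerivAt (fun s : 𝕜 => NormedSpace.exp (s • K)) (NormedSpace.exp (t • K) * K) t :=
    hasDerivAt_exp_smul_const K t
  have hneg : HasDerivAt (fun s : 𝕜 => NormedSpace.exp (-s • K))
      (-K * NormedSpace.exp (-t • K)) t := by
    simpa only [smul_neg, neg_smul] using hasDerivAt_exp_smul_const' (-K) t
  refine ((hpos.mul_const A).mul hneg).congr_deriv ?_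
  rw [heisenbergFlow, Ring.lie_def]
  noncomm_ring

variable {𝔸 : Type*} [NormedRing 𝔸] [NormedAlgebra ℝ 𝔸] [CompleteSpace 𝔸]

theorem continuous_heisenbergFlow (K A : 𝔸) : Continuous fun t : ℝ => heisenbergFlow K t A :=
  continuous_iff_continuousAt.mpr fun t => (hasDerivAt_heisenbergFlow K A t).continuousAt

theorem integral_heisenbergFlow_lie (K A : 𝔸) (a b : ℝ) :
    ∫ t in a..b, heisenbergFlow K t ⁅K, A⁆ = heisenbergFlow K b A - heisenbergFlow K a A :=
  intervalIntegral.integral_eq_sub_of_hasDerivAt (fun t _ => hasDerivAt_heisenbergFlow K A t)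
    ((continuous_heisenbergFlow K ⁅K, A⁆).intervalIntegrable a b)

end HeisenbergFlow

section PosSemidef

open scoped ComplexOrder MatrixOrder

variable {n 𝕜 : Type*} [Fintype n] [RCLike 𝕜]

theorem trace_mul_nonneg_of_posSemidef {P Q : Matrix n n 𝕜} (hP : P.PosSemidef)
    (hQ : Q.PosSemidef) : 0 ≤ (P * Q).trace := by
  classical
  obtain ⟨B, rfl⟩ := CStarAlgebra.nonneg_iff_eq_star_mul_self.mp hQ.nonneg
  rw [star_eq_conjTranspose, ← Matrix.mul_assoc, Matrix.trace_mul_comm, ← Matrix.mul_assoc]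
  exact (hP.mul_mul_conjTranspose_same B).trace_nonneg

theorem posSemidef_exp_of_isHermitian [DecidableEq n] {A : Matrix n n 𝕜} (hA : A.IsHermitian) :
    (NormedSpace.exp A).PosSemidef := by
  have hhalf : (NormedSpace.exp ((1 / 2 : ℝ) • A)).IsHermitian :=
    (hA.smul (IsSelfAdjoint.all (1 / 2 : ℝ))).exp
  have hsq : NormedSpace.exp A =
      (NormedSpace.exp ((1 / 2 : ℝ) • A))ᴴ * NormedSpace.exp ((1 / 2 : ℝ) • A) := by
    rw [hhalf.eq, ← Matrix.exp_add_of_commute _ _ (Commute.refl _), ← add_smul, add_halves,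
      one_smul]
  rw [hsq]
  exact Matrix.posSemidef_conjTranspose_mul_self _

end PosSemidef

theorem conjTranspose_lie_of_isHermitian {n R : Type*} [Fintype n] [NonUnitalRing R] [StarRing R]
    {K : Matrix n n R} (hK : K.IsHermitian) (A : Matrix n n R) : ⁅K, A⁆ᴴ = ⁅K, -Aᴴ⁆ := by
  simp only [Ring.lie_def, Matrix.conjTranspose_sub, Matrix.conjTranspose_mul, hK.eq,
    Matrix.mul_neg, Matrix.neg_mul, neg_sub_neg]

section Gibbs

-- Matrices have no canonical norm; the choice is immaterial, as the Bochner integral below depends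
-- only on the topology.
open scoped Matrix.Norms.Operator ComplexOrder

variable {n : Type*} [Fintype n] [DecidableEq n]

/-- The Gibbs expectation `gibbsC β H` as a linear functional of the observable. -/
def gibbsLinearMap (β : ℝ) (H : Matrix n n ℂ) : Matrix n n ℂ →ₗ[ℂ] ℂ :=
  (NormedSpace.exp (-β • H)).trace⁻¹ •
    (Matrix.traceLinearMap n ℂ ℂ ∘ₗ LinearMap.mulLeft ℂ (NormedSpace.exp (-β • H)))

theorem gibbsLinearMap_apply (β : ℝ) (H A : Matrix n n ℂ) :
    gibbsLinearMap β H A = gibbsC β H A := by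
  simp [gibbsLinearMap, gibbsC, div_eq_inv_mul]

theorem gibbsC_sub (β : ℝ) (H A B : Matrix n n ℂ) :
    gibbsC β H (A - B) = gibbsC β H A - gibbsC β H B := by
  simp only [← gibbsLinearMap_apply, map_sub]

theorem gibbsC_heisenbergFlow_mul (β s : ℝ) (H A B : Matrix n n ℂ) :
    gibbsC β H (heisenbergFlow H s A * B) =
      (NormedSpace.exp ((s - β) • H) * (A * NormedSpace.exp (-s • H) * B)).trace /
        (NormedSpace.exp (-β • H)).trace := by
  have hexp : NormedSpace.exp ((s - β) • H) =
      NormedSpace.exp (-β • H) * NormedSpace.exp (s • H) := by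
    rw [← Matrix.exp_add_of_commute _ _ (((Commute.refl H).smul_left _).smul_right _), ← add_smul,
      neg_add_eq_sub]
  simp only [gibbsC, heisenbergFlow, hexp, Matrix.mul_assoc]

/-- The Kubo–Martin–Schwinger condition. -/
theorem gibbsC_heisenbergFlow_mul_comm (β : ℝ) (H A B : Matrix n n ℂ) :
    gibbsC β H (heisenbergFlow H β A * B) = gibbsC β H (B * A) := by
  rw [gibbsC_heisenbergFlow_mul, sub_self, zero_smul, NormedSpace.exp_zero, one_mul, gibbsC,
    Matrix.mul_assoc, Matrix.trace_mul_comm, Matrix.mul_assoc]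

theorem gibbsC_heisenbergFlow_conjTranspose_mul_self_nonneg {H : Matrix n n ℂ}
    (hH : H.IsHermitian) (β s : ℝ) (A : Matrix n n ℂ) :
    0 ≤ gibbsC β H (heisenbergFlow H s Aᴴ * A) := by
  have hexp (r : ℝ) : (NormedSpace.exp (r • H)).PosSemidef :=
    posSemidef_exp_of_isHermitian (hH.smul (IsSelfAdjoint.all r))
  rw [gibbsC_heisenbergFlow_mul, div_eq_mul_inv]
  exact mul_nonneg
    (trace_mul_nonneg_of_posSemidef (hexp _) ((hexp _).conjTranspose_mul_mul_same A))
    (inv_nonneg.mpr (hexp _).trace_nonneg)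

theorem duhamelC_eq_integral_heisenbergFlow (β : ℝ) (H A B : Matrix n n ℂ) :
    duhamelC β H A B = ∫ t in (0 : ℝ)..1, gibbsC β H (heisenbergFlow H (t * β) Aᴴ * B) :=
  rfl

theorem duhamelC_eq_gibbsC_integral (β : ℝ) (H A B : Matrix n n ℂ) :
    duhamelC β H A B =
      gibbsC β H ((∫ t in (0 : ℝ)..1, heisenbergFlow (β • H) t Aᴴ) * B) := by
  let expectMul : Matrix n n ℂ →L[ℂ] ℂ :=
    LinearMap.toContinuousLinearMap (gibbsLinearMap β H ∘ₗ LinearMap.mulRight ℂ B)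
  have expectMul_apply (X : Matrix n n ℂ) : expectMul X = gibbsC β H (X * B) :=
    gibbsLinearMap_apply β H (X * B)
  have hintegrable :=
    (continuous_heisenbergFlow (β • H) Aᴴ).intervalIntegrable (μ := MeasureTheory.volume) 0 1
  calc duhamelC β H A B
      = ∫ t in (0 : ℝ)..1, expectMul (heisenbergFlow (β • H) t Aᴴ) := by
        simp only [duhamelC_eq_integral_heisenbergFlow, expectMul_apply, heisenbergFlow_smul]
    _ = expectMul (∫ t in (0 : ℝ)..1, heisenbergFlow (β • H) t Aᴴ) :=
        expectMul.intervalIntegral_comp_comm hintegrable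
    _ = gibbsC β H ((∫ t in (0 : ℝ)..1, heisenbergFlow (β • H) t Aᴴ) * B) := expectMul_apply _

theorem duhamelC_lie_left {H : Matrix n n ℂ} (hH : H.IsHermitian) (β : ℝ) (A B : Matrix n n ℂ) :
    duhamelC β H ⁅β • H, A⁆ B = gibbsC β H ⁅Aᴴ, B⁆ := by
  have hK : (β • H).IsHermitian := hH.smul (IsSelfAdjoint.all β)
  have hintegral : ∫ t in (0 : ℝ)..1, heisenbergFlow (β • H) t ⁅β • H, A⁆ᴴ =
      Aᴴ - heisenbergFlow H β Aᴴ := by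
    rw [conjTranspose_lie_of_isHermitian hK]
    calc ∫ t in (0 : ℝ)..1, heisenbergFlow (β • H) t ⁅β • H, -Aᴴ⁆
        = heisenbergFlow (β • H) (1 : ℝ) (-Aᴴ) - heisenbergFlow (β • H) (0 : ℝ) (-Aᴴ) :=
          integral_heisenbergFlow_lie (β • H) (-Aᴴ) 0 1
      _ = Aᴴ - heisenbergFlow H β Aᴴ := by
          simp [heisenbergFlow, neg_add_eq_sub]
  rw [duhamelC_eq_gibbsC_integral, hintegral, sub_mul, gibbsC_sub, gibbsC_heisenbergFlow_mul_comm,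
    ← gibbsC_sub, Ring.lie_def]

theorem duhamelC_self_nonneg {H : Matrix n n ℂ} (hH : H.IsHermitian) (β : ℝ) (A : Matrix n n ℂ) :
    0 ≤ duhamelC β H A A := by
  rw [duhamelC_eq_integral_heisenbergFlow, intervalIntegral.integral_of_le zero_le_one]
  exact MeasureTheory.integral_nonneg fun t =>
    gibbsC_heisenbergFlow_conjTranspose_mul_self_nonneg hH β (t * β) A

end Gibbs

open scoped ComplexOrder in
theorem stmt8_general {n : Type*} [Fintype n] [DecidableEq n] [Nonempty n]
    (β : ℝ) (H A : Matrix n n ℂ) (hH : H.IsHermitian) :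
    gibbsC β H ⁅Aᴴ, ⁅β • H, A⁆⁆ = duhamelC β H ⁅β • H, A⁆ ⁅β • H, A⁆ ∧
    (gibbsC β H ⁅Aᴴ, ⁅β • H, A⁆⁆).im = 0 ∧ 0 ≤ (gibbsC β H ⁅Aᴴ, ⁅β • H, A⁆⁆).re := by
  have heq := duhamelC_lie_left hH β A ⁅β • H, A⁆
  obtain ⟨hre, him⟩ := Complex.nonneg_iff.mp (heq ▸ duhamelC_self_nonneg hH β ⁅β • H, A⁆)
  exact ⟨heq.symm, him.symm, hre⟩

theorem stmt8 {n : Type*} [Fintype n] [DecidableEq n] [Nonempty n]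
    (β : ℝ) (hβ : 0 < β) (H A : Matrix n n ℂ)
    (hH : H.IsHermitian) (hA : A.IsHermitian) :
    gibbsC β H ⁅A, ⁅β • H, A⁆⁆ = duhamelC β H ⁅β • H, A⁆ ⁅β • H, A⁆ ∧
    (gibbsC β H ⁅A, ⁅β • H, A⁆⁆).im = 0 ∧ 0 ≤ (gibbsC β H ⁅A, ⁅β • H, A⁆⁆).re := by
  simpa only [hA.eq] using stmt8_general β H A hH
end
end
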